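/- arXiv:2301.12027 — 4 statements merged into one kernel-verified Lean document; each statement's English description precedes it below -/
import Mathlib

section
/- Let p ∈ (0,1), let (x̄,t̄) ∈ ℝ² with t̄ < |x̄|^p, and let (x*,t*) be an optimal solution of the projection problem, i.e., |x*|^p ≤ t* and (t*−t̄)² + (x*−x̄)² ≤ (t−t̄)² + (x−x̄)² for all (x,t) ∈ ℝ² with |x|^p ≤ t. Then x* has the same sign as x̄ or is zero, i.e., x*·x̄ ≥ 0. -/
/-!
The epigraph of an even function is invariant under `(x, t) ↦ (-x, t)`, and this reflection does not
change the `t`-part of the distance. So a nearest point `(x, t)` satisfies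
`‖x - x̄‖ ≤ ‖-x - x̄‖ = ‖x + x̄‖`, which by polarization means that `⟪x, x̄⟫` is nonnegative.
-/

open scoped RealInnerProductSpace

section InnerProductSpace

variable {E : Type*} [SeminormedAddCommGroup E] [InnerProductSpace ℝ E]

theorem norm_sub_le_norm_add_iff_real_inner_nonneg {x y : E} :
    ‖x - y‖ ≤ ‖x + y‖ ↔ 0 ≤ ⟪x, y⟫ := by
  rw [← sq_le_sq₀ (norm_nonneg _) (norm_nonneg _), norm_sub_sq_real, norm_add_sq_real]
  constructor <;> intro h <;> linarith

theorem prop1a_general {f : E → ℝ} (hf : f.Even) {xbar xs : E} {tbar ts : ℝ} (hfeas : f xs ≤ ts)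
    (hopt : IsMinOn (fun z : E × ℝ ↦ (z.2 - tbar) ^ 2 + ‖z.1 - xbar‖ ^ 2)
      {z | f z.1 ≤ z.2} (xs, ts)) :
    0 ≤ ⟪xs, xbar⟫ := by
  have hreflect : (-xs, ts) ∈ {z : E × ℝ | f z.1 ≤ z.2} := (hf xs).trans_le hfeas
  have hsq : ‖xs - xbar‖ ^ 2 ≤ ‖-xs - xbar‖ ^ 2 := le_of_add_le_add_left (hopt hreflect)
  have hnorm : ‖-xs - xbar‖ = ‖xs + xbar‖ := by rw [← neg_add', norm_neg]
  rw [← norm_sub_le_norm_add_iff_real_inner_nonneg, ← hnorm]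
  exact le_of_sq_le_sq hsq (norm_nonneg _)

end InnerProductSpace

/-- Proposition 1(a): if `t̄ < |x̄|^p` and `(xs, ts)` minimizes
`g(x,t) = (t - t̄)^2 + (x - x̄)^2` over the epigraph `{(x,t) : |x|^p ≤ t}`,
then `xs` has the same sign as `x̄` (or is zero), i.e. `xs * x̄ ≥ 0`. -/
theorem prop1a (p xbar tbar xs ts : ℝ)
    (hp0 : 0 < p) (hp1 : p < 1)
    (hout : tbar < |xbar| ^ p)
    (hfeas : |xs| ^ p ≤ ts)
    (hopt : ∀ x t : ℝ, |x| ^ p ≤ t →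
      (ts - tbar) ^ 2 + (xs - xbar) ^ 2 ≤ (t - tbar) ^ 2 + (x - xbar) ^ 2) :
    xs * xbar ≥ 0 := by
  rw [ge_iff_le, ← Real.inner_apply]
  exact prop1a_general (f := fun x ↦ |x| ^ p) (fun x ↦ by simp only [abs_neg]) hfeas <|
    isMinOn_iff.mpr fun z hz ↦ by simpa only [Real.norm_eq_abs, sq_abs] using hopt z.1 z.2 hz
end

section
/- Let p ∈ (0,1), let (x̄,t̄) ∈ ℝ² with t̄ < |x̄|^p, and let (x*,t*) be an optimal solution of the projection problem, i.e., |x*|^p ≤ t* and (t*−t̄)² + (x*−x̄)² ≤ (t−t̄)² + (x−x̄)² for all (x,t) ∈ ℝ² with |x|^p ≤ t. Then |x*|^p ≥ t̄. -/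
/-!
If `f x < t̄` at a minimizer `(x, t)`, the point can be moved inside the epigraph in two ways.
Vertically, `t` can approach `t̄`, so `t = t̄`. Then upper semicontinuity of `f` leaves room above
the graph to move horizontally in every direction, so `x = x̄`, contradicting `t̄ ≤ f x̄`. Convexity
of the squared distance makes local optimality enough in both steps.
-/

open Filter Set Topology

section DistSq

variable {E : Type*} [NormedAddCommGroup E] [NormedSpace ℝ E] {s : Set E} {x c : E}

lemma convexOn_dist_sq (hs : Convex ℝ s) (c : E) : ConvexOn ℝ s fun y ↦ dist y c ^ 2 :=
  (convexOn_dist c hs).pow (fun _ _ ↦ dist_nonneg) 2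

lemma eq_of_isLocalMinOn_dist_sq (hs : Convex ℝ s) (hx : x ∈ s) (hc : c ∈ s)
    (hmin : IsLocalMinOn (fun y ↦ dist y c ^ 2) s x) : x = c := by
  have hle : dist x c ^ 2 ≤ dist c c ^ 2 :=
    IsMinOn.of_isLocalMinOn_of_convexOn hx hmin (convexOn_dist_sq hs c) hc
  rw [dist_self, sq_le_sq₀ dist_nonneg le_rfl] at hle
  exact dist_le_zero.mp hle

end DistSq

/-- The epigraph of a real function: the feasible set of the projection problem. -/
def epigraph {E : Type*} (f : E → ℝ) : Set (E × ℝ) :=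
  {z | f z.1 ≤ z.2}

/-- The squared Euclidean distance from `q` to `z` in `E × ℝ`, the objective of the projection
problem. It is spelled out because the metric on a product in Mathlib is the sup metric. -/
def sqDist {E : Type*} [PseudoMetricSpace E] (q z : E × ℝ) : ℝ :=
  dist z.2 q.2 ^ 2 + dist z.1 q.1 ^ 2

section Fibers

variable {E : Type*} [PseudoMetricSpace E] {f : E → ℝ} {q z : E × ℝ}

lemma isLocalMinOn_dist_sq_snd (hmin : IsLocalMinOn (sqDist q) (epigraph f) z) :
    IsLocalMinOn (fun t ↦ dist t q.2 ^ 2) (Ici (f z.1)) z.2 := by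
  have hvert : Tendsto (fun t ↦ (z.1, t)) (𝓝[Ici (f z.1)] z.2) (𝓝[epigraph f] z) :=
    (Continuous.prodMk_right z.1).continuousWithinAt.tendsto_nhdsWithin fun _ ht ↦ ht
  filter_upwards [hvert.eventually hmin] with t ht
  exact le_of_add_le_add_right ht

lemma isLocalMin_dist_sq_fst (hf : UpperSemicontinuousAt f z.1) (hz : f z.1 < z.2)
    (hmin : IsLocalMinOn (sqDist q) (epigraph f) z) :
    IsLocalMin (fun x ↦ dist x q.1 ^ 2) z.1 := by
  have hhoriz : Tendsto (fun x ↦ (x, z.2)) (𝓝 z.1) (𝓝[epigraph f] z) :=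
    tendsto_nhdsWithin_iff.mpr
      ⟨(Continuous.prodMk_left z.2).tendsto z.1, (hf z.2 hz).mono fun _ hx ↦ hx.le⟩
  filter_upwards [hhoriz.eventually hmin] with x hx
  exact le_of_add_le_add_left hx

end Fibers

theorem prop1c_general {E : Type*} [NormedAddCommGroup E] [NormedSpace ℝ E] {f : E → ℝ}
    {q z : E × ℝ} (hf : UpperSemicontinuousAt f z.1) (hq : q.2 ≤ f q.1) (hz : z ∈ epigraph f)
    (hmin : IsLocalMinOn (sqDist q) (epigraph f) z) : q.2 ≤ f z.1 := by
  by_contra! hlt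
  have hsnd : z.2 = q.2 :=
    eq_of_isLocalMinOn_dist_sq (convex_Ici _) hz hlt.le (isLocalMinOn_dist_sq_snd hmin)
  have hfst : z.1 = q.1 :=
    eq_of_isLocalMinOn_dist_sq convex_univ (mem_univ _) (mem_univ _)
      ((isLocalMin_dist_sq_fst hf (hlt.trans_eq hsnd.symm) hmin).on univ)
  exact hlt.not_ge (hfst ▸ hq)

/-- Proposition 1(c): if `t̄ < |x̄|^p` and `(xs, ts)` minimizes
`g(x,t) = (t - t̄)^2 + (x - x̄)^2` over the epigraph `{(x,t) : |x|^p ≤ t}`,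
then `|xs|^p ≥ t̄`. -/
theorem prop1c (p xbar tbar xs ts : ℝ)
    (hp0 : 0 < p) (hp1 : p < 1)
    (hout : tbar < |xbar| ^ p)
    (hfeas : |xs| ^ p ≤ ts)
    (hopt : ∀ x t : ℝ, |x| ^ p ≤ t →
      (ts - tbar) ^ 2 + (xs - xbar) ^ 2 ≤ (t - tbar) ^ 2 + (x - xbar) ^ 2) :
    |xs| ^ p ≥ tbar := by
  have hcont : Continuous fun x : ℝ ↦ |x| ^ p :=
    continuous_abs.rpow_const fun _ ↦ Or.inr hp0.le
  have hmin : IsMinOn (sqDist (xbar, tbar)) (epigraph fun x : ℝ ↦ |x| ^ p) (xs, ts) := by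
    intro z hz
    simpa only [mem_ofPred_eq, sqDist, Real.dist_eq, sq_abs] using hopt z.1 z.2 hz
  exact prop1c_general (z := (xs, ts)) hcont.continuousAt.upperSemicontinuousAt hout.le hfeas
    hmin.localize
end

section
/- Let p ∈ (0,1), let (x̄,t̄) ∈ ℝ² with t̄ < |x̄|^p, and let (x*,t*) be an optimal solution of the projection problem, i.e., |x*|^p ≤ t* and (t*−t̄)² + (x*−x̄)² ≤ (t−t̄)² + (x−x̄)² for all (x,t) ∈ ℝ² with |x|^p ≤ t. Then x* is a global minimizer of the one-dimensional function h(x) = (|x|^p − t̄)² + (x − x̄)² over ℝ, and t* = |x*|^p. -/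
/-!
A minimizer `(xs, ts)` over the epigraph of `f` with `f xs < ts` would lie in its interior, hence
be a local minimizer of the squared distance to `(xbar, tbar)` on the whole space. That function is
convex and vanishes only at `(xbar, tbar)`, so the two points would coincide, contradicting
`tbar ≤ f xbar`. So `ts = f xs`, and comparing with the points `(x, f x)` of the graph gives the
scalar problem.
-/

open Set Topology

section SquaredDistance

variable {E F : Type*} [NormedAddCommGroup E] [NormedSpace ℝ E]
  [NormedAddCommGroup F] [NormedSpace ℝ F]

lemma convexOn_univ_norm_sub_sq (a : E) : ConvexOn ℝ univ fun x : E ↦ ‖x - a‖ ^ 2 := by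
  simp only [← dist_eq_norm]
  exact (convexOn_univ_dist a).pow (fun _ _ ↦ dist_nonneg) 2

lemma convexOn_univ_norm_sub_sq_add_norm_sub_sq (a : E) (b : F) :
    ConvexOn ℝ univ fun q : E × F ↦ ‖q.2 - b‖ ^ 2 + ‖q.1 - a‖ ^ 2 :=
  ((convexOn_univ_norm_sub_sq b).comp_linearMap (LinearMap.snd ℝ E F)).add
    ((convexOn_univ_norm_sub_sq a).comp_linearMap (LinearMap.fst ℝ E F))

lemma eq_of_isLocalMin_norm_sub_sq_add_norm_sub_sq {a : E} {b : F} {q : E × F}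
    (hq : IsLocalMin (fun r : E × F ↦ ‖r.2 - b‖ ^ 2 + ‖r.1 - a‖ ^ 2) q) : q = (a, b) := by
  have h_le_zero : ‖q.2 - b‖ ^ 2 + ‖q.1 - a‖ ^ 2 ≤ 0 := by
    simpa using IsMinOn.of_isLocalMin_of_convex_univ hq
      (convexOn_univ_norm_sub_sq_add_norm_sub_sq a b) (a, b)
  obtain ⟨h_snd, h_fst⟩ := (add_eq_zero_iff_of_nonneg (sq_nonneg _) (sq_nonneg _)).mp
    (h_le_zero.antisymm (by positivity))
  exact Prod.ext (by simpa [sub_eq_zero] using h_fst) (by simpa [sub_eq_zero] using h_snd)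

end SquaredDistance

lemma epigraph_mem_nhds {X α : Type*} [TopologicalSpace X] [LinearOrder α] [DenselyOrdered α]
    [TopologicalSpace α] [ClosedIicTopology α] {f : X → α} {x : X} {t : α}
    (hf : UpperSemicontinuousAt f x) (ht : f x < t) :
    {q : X × α | f q.1 ≤ q.2} ∈ 𝓝 (x, t) := by
  obtain ⟨c, hxc, hct⟩ := exists_between ht
  filter_upwards [prod_mem_nhds (hf c hxc) (Ioi_mem_nhds hct)] with q hq
  exact (lt_trans hq.1 hq.2).le

theorem projection_reduces_to_scalar_general {E : Type*} [NormedAddCommGroup E] [NormedSpace ℝ E]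
    {f : E → ℝ} {xbar xs : E} {tbar ts : ℝ} (hf : UpperSemicontinuousAt f xs)
    (hout : tbar ≤ f xbar) (hfeas : f xs ≤ ts)
    (hopt : ∀ x t, f x ≤ t →
      (ts - tbar) ^ 2 + ‖xs - xbar‖ ^ 2 ≤ (t - tbar) ^ 2 + ‖x - xbar‖ ^ 2) :
    (∀ x, (f xs - tbar) ^ 2 + ‖xs - xbar‖ ^ 2 ≤ (f x - tbar) ^ 2 + ‖x - xbar‖ ^ 2)
    ∧ ts = f xs := by
  have h_graph : ts = f xs := by
    by_contra h_ne
    have h_above : f xs < ts := lt_of_le_of_ne' hfeas h_ne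
    have h_min : IsLocalMin (fun q : E × ℝ ↦ ‖q.2 - tbar‖ ^ 2 + ‖q.1 - xbar‖ ^ 2) (xs, ts) := by
      filter_upwards [epigraph_mem_nhds hf h_above] with q hq
      simpa only [Real.norm_eq_abs, sq_abs] using hopt q.1 q.2 hq
    obtain ⟨rfl, rfl⟩ := Prod.mk.inj (eq_of_isLocalMin_norm_sub_sq_add_norm_sub_sq h_min)
    exact hout.not_gt h_above
  exact ⟨fun x ↦ h_graph ▸ hopt x (f x) le_rfl, h_graph⟩

/-- Reduction of the 2-D projection problem to the scalar problem:
if `t̄ < |x̄|^p` and `(xs, ts)` minimizes `g(x,t) = (t - t̄)^2 + (x - x̄)^2`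
over the epigraph `{(x,t) : |x|^p ≤ t}`, then `xs` is a global minimizer of
`h(x) = (|x|^p - t̄)^2 + (x - x̄)^2` over `ℝ`, and `ts = |xs|^p`. -/
theorem projection_reduces_to_scalar (p xbar tbar xs ts : ℝ)
    (hp0 : 0 < p) (hp1 : p < 1)
    (hout : tbar < |xbar| ^ p)
    (hfeas : |xs| ^ p ≤ ts)
    (hopt : ∀ x t : ℝ, |x| ^ p ≤ t →
      (ts - tbar) ^ 2 + (xs - xbar) ^ 2 ≤ (t - tbar) ^ 2 + (x - xbar) ^ 2) :
    (∀ x : ℝ,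
      (|xs| ^ p - tbar) ^ 2 + (xs - xbar) ^ 2 ≤ (|x| ^ p - tbar) ^ 2 + (x - xbar) ^ 2)
    ∧ ts = |xs| ^ p := by
  have h_cont : Continuous fun x : ℝ ↦ |x| ^ p := continuous_abs.rpow_const fun _ ↦ Or.inr hp0.le
  simpa only [Real.norm_eq_abs, sq_abs] using
    projection_reduces_to_scalar_general h_cont.continuousAt.upperSemicontinuousAt hout.le hfeas
      (by simpa only [Real.norm_eq_abs, sq_abs] using hopt)
end

section
/- Let L ≤ min(m,n), let P, U ∈ ℝ^{m×L} and Q, V ∈ ℝ^{n×L} satisfy PᵀP = QᵀQ = UᵀU = VᵀV = I_L, and let Σ, Δ ∈ ℝ^{L×L} be diagonal matrices whose diagonal entries are nonnegative and arranged in nonincreasing order. Then Tr(Q Σᵀ Pᵀ U Δ Vᵀ) ≤ Tr(Σᵀ Δ) = Σ_{i=1}^L σ_i δ_i, where σ_i and δ_i are the i-th diagonal entries of Σ and Δ. -/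
open Matrix

/-!
Cyclicity of the trace turns the left-hand side into `σᵀ M δ`, where `M` is the entrywise product
of the contractions `PᵀU` and `QᵀV`. Rows and columns of a contraction have Euclidean norm at most
one, so by Cauchy–Schwarz the entrywise absolute value of `M` is doubly substochastic. Such a matrix
is a corner of a doubly stochastic one, hence by Birkhoff's theorem a corner of a convex combination
of permutation matrices, and the claim becomes the rearrangement inequality for `σ` and `δ` padded
by zeros.
-/

section DoublySubstochastic

variable {R ι : Type*}

theorem monovary_sumElim_zero {κ S : Type*} [Zero R] [Preorder R] [Zero S] [Preorder S]
    {x : ι → R} {y : ι → S} (hx : ∀ i, 0 ≤ x i) (hy : ∀ i, 0 ≤ y i) (hxy : Monovary x y) :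
    Monovary (Sum.elim x (0 : κ → R)) (Sum.elim y (0 : κ → S)) := by
  rintro (i | i) (j | j) hij
  · exact hxy hij
  · exact absurd hij (hy i).not_gt
  · exact hx j
  · exact le_rfl

variable [Fintype ι]

/-- A square matrix is doubly substochastic if its entries are nonnegative and its row and column
sums are at most one: the relaxation of `doublyStochastic` satisfied by the absolute values of the
entrywise product of two contractions. -/
structure IsDoublySubstochastic [Semiring R] [PartialOrder R] (M : Matrix ι ι R) : Prop where
  nonneg : ∀ i j, 0 ≤ M i j
  sum_row_le_one : ∀ i, ∑ j, M i j ≤ 1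
  sum_col_le_one : ∀ j, ∑ i, M i j ≤ 1

/-- The doubly stochastic dilation of a doubly substochastic matrix `M`: the off-diagonal blocks
carry the mass missing from the rows and the columns of `M`, and the block `Mᵀ` completes the
remaining rows and columns. -/
def doublyStochasticDilation [Ring R] [DecidableEq ι] (M : Matrix ι ι R) :
    Matrix (ι ⊕ ι) (ι ⊕ ι) R :=
  fromBlocks M (diagonal fun i ↦ 1 - ∑ j, M i j) (diagonal fun j ↦ 1 - ∑ i, M i j) Mᵀ

theorem IsDoublySubstochastic.doublyStochasticDilation_mem [Ring R] [PartialOrder R]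
    [IsOrderedRing R] [DecidableEq ι] {M : Matrix ι ι R} (hM : IsDoublySubstochastic M) :
    doublyStochasticDilation M ∈ doublyStochastic R (ι ⊕ ι) := by
  refine mem_doublyStochastic_iff_sum.2 ⟨?_, ?_, ?_⟩
  · have diagonal_nonneg {d : ι → R} (hd : ∀ i, 0 ≤ d i) (i j : ι) : 0 ≤ diagonal d i j := by
      rw [diagonal_apply]
      split_ifs
      exacts [hd i, le_rfl]
    rintro (i | i) (j | j)
    · exact hM.nonneg i j
    · exact diagonal_nonneg (fun i ↦ sub_nonneg.2 (hM.sum_row_le_one i)) i j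
    · exact diagonal_nonneg (fun j ↦ sub_nonneg.2 (hM.sum_col_le_one j)) i j
    · exact hM.nonneg j i
  · rintro (i | i) <;> simp [doublyStochasticDilation, Fintype.sum_sum_type, diagonal_apply]
  · rintro (j | j) <;> simp [doublyStochasticDilation, Fintype.sum_sum_type, diagonal_apply]

section LinearOrderedField

variable [Field R] [LinearOrder R] [IsStrictOrderedRing R] {M : Matrix ι ι R} {x y : ι → R}

theorem dotProduct_mulVec_le_of_mem_doublyStochastic [DecidableEq ι]
    (hM : M ∈ doublyStochastic R ι) (hxy : Monovary x y) : x ⬝ᵥ M *ᵥ y ≤ x ⬝ᵥ y := by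
  obtain ⟨w, hw_nonneg, hw_sum, rfl⟩ := exists_eq_sum_perm_of_mem_doublyStochastic hM
  calc x ⬝ᵥ (∑ τ, w τ • τ.permMatrix R) *ᵥ y
      = ∑ τ, w τ * ∑ i, x i * y (τ i) := by
        simp only [sum_mulVec, smul_mulVec, permMatrix_mulVec, dotProduct_sum, dotProduct_smul,
          smul_eq_mul]
        rfl
    _ ≤ ∑ τ, w τ * (x ⬝ᵥ y) := Finset.sum_le_sum fun τ _ ↦
        mul_le_mul_of_nonneg_left hxy.sum_mul_comp_perm_le_sum_mul (hw_nonneg τ)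
    _ = x ⬝ᵥ y := by rw [← Finset.sum_mul, hw_sum, one_mul]

theorem IsDoublySubstochastic.dotProduct_mulVec_le (hM : IsDoublySubstochastic M)
    (hx : ∀ i, 0 ≤ x i) (hy : ∀ i, 0 ≤ y i) (hxy : Monovary x y) : x ⬝ᵥ M *ᵥ y ≤ x ⬝ᵥ y := by
  classical
  simpa [doublyStochasticDilation, fromBlocks_mulVec] using
    dotProduct_mulVec_le_of_mem_doublyStochastic hM.doublyStochasticDilation_mem
      (monovary_sumElim_zero (κ := ι) hx hy hxy)

end LinearOrderedField

end DoublySubstochastic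

section Contraction

open scoped Matrix.Norms.L2Operator
open RCLike (re)

variable {𝕜 m n ι : Type*} [RCLike 𝕜] [Fintype m] [Fintype n] [Fintype ι] [DecidableEq ι]

theorem l2_opNorm_le_one_of_conjTranspose_mul_self_eq_one {A : Matrix m ι 𝕜} (hA : Aᴴ * A = 1) :
    ‖A‖ ≤ 1 := by
  have norm_one_le : ‖(1 : Matrix ι ι 𝕜)‖ ≤ 1 := by
    rw [← diagonal_one, l2_opNorm_diagonal]
    exact (pi_norm_le_iff_of_nonneg zero_le_one).2 fun _ ↦ norm_one.le
  rw [← hA, l2_opNorm_conjTranspose_mul_self, ← sq] at norm_one_le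
  exact (sq_le_one_iff₀ (norm_nonneg A)).1 norm_one_le

theorem l2_opNorm_conjTranspose_mul_le_one {κ : Type*} [Fintype κ] [DecidableEq κ]
    {A : Matrix m ι 𝕜} {B : Matrix m κ 𝕜} (hA : ‖A‖ ≤ 1) (hB : ‖B‖ ≤ 1) : ‖Aᴴ * B‖ ≤ 1 := by
  classical
  calc ‖Aᴴ * B‖ ≤ ‖Aᴴ‖ * ‖B‖ := l2_opNorm_mul Aᴴ B
    _ ≤ 1 := mul_le_one₀ ((l2_opNorm_conjTranspose A).trans_le hA) (norm_nonneg B) hB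

theorem sum_norm_sq_col_le_l2_opNorm_sq (A : Matrix m ι 𝕜) (j : ι) :
    ∑ i, ‖A i j‖ ^ 2 ≤ ‖A‖ ^ 2 := by
  have col_norm_le : ‖WithLp.toLp 2 (A.col j)‖ ≤ ‖A‖ := by
    simpa using l2_opNorm_mulVec A (EuclideanSpace.single j 1)
  simpa [EuclideanSpace.norm_sq_eq] using pow_le_pow_left₀ (norm_nonneg _) col_norm_le 2

theorem sum_norm_sq_row_le_l2_opNorm_sq (A : Matrix m ι 𝕜) (i : m) :
    ∑ j, ‖A i j‖ ^ 2 ≤ ‖A‖ ^ 2 := by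
  classical
  simpa [l2_opNorm_conjTranspose] using sum_norm_sq_col_le_l2_opNorm_sq Aᴴ i

theorem isDoublySubstochastic_norm_mul_norm {A B : Matrix ι ι 𝕜} (hA : ‖A‖ ≤ 1) (hB : ‖B‖ ≤ 1) :
    IsDoublySubstochastic (of fun i j ↦ ‖A i j‖ * ‖B i j‖) := by
  have sum_mul_le_one {f g : ι → ℝ} (hf : ∑ i, f i ^ 2 ≤ ‖A‖ ^ 2) (hg : ∑ i, g i ^ 2 ≤ ‖B‖ ^ 2) :
      ∑ i, f i * g i ≤ 1 :=
    calc ∑ i, f i * g i ≤ √(∑ i, f i ^ 2) * √(∑ i, g i ^ 2) := Real.sum_mul_le_sqrt_mul_sqrt _ f g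
      _ ≤ ‖A‖ * ‖B‖ := mul_le_mul (Real.sqrt_le_iff.2 ⟨norm_nonneg A, hf⟩)
          (Real.sqrt_le_iff.2 ⟨norm_nonneg B, hg⟩) (Real.sqrt_nonneg _) (norm_nonneg A)
      _ ≤ 1 := mul_le_one₀ hA (norm_nonneg B) hB
  exact
    { nonneg := fun i j ↦ mul_nonneg (norm_nonneg (A i j)) (norm_nonneg (B i j))
      sum_row_le_one := fun i ↦ sum_mul_le_one
        (sum_norm_sq_row_le_l2_opNorm_sq A i) (sum_norm_sq_row_le_l2_opNorm_sq B i)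
      sum_col_le_one := fun j ↦ sum_mul_le_one
        (sum_norm_sq_col_le_l2_opNorm_sq A j) (sum_norm_sq_col_le_l2_opNorm_sq B j) }

theorem trace_diagonal_mul_mul_diagonal_mul_conjTranspose {R : Type*} [CommSemiring R] [Star R]
    (s d : ι → R) (A B : Matrix ι ι R) :
    trace (diagonal s * A * diagonal d * Bᴴ) = ∑ i, ∑ j, s i * (A i j * star (B i j) * d j) := by
  simp only [trace, diag_apply, mul_apply (N := Bᴴ), mul_diagonal, diagonal_mul,
    conjTranspose_apply]
  exact Finset.sum_congr rfl fun i _ ↦ Finset.sum_congr rfl fun j _ ↦ by ring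

variable {σ δ : ι → ℝ}

theorem re_trace_diagonal_mul_mul_diagonal_mul_conjTranspose_le {A B : Matrix ι ι 𝕜}
    (hA : ‖A‖ ≤ 1) (hB : ‖B‖ ≤ 1) (hσ : ∀ i, 0 ≤ σ i) (hδ : ∀ i, 0 ≤ δ i) (hσδ : Monovary σ δ) :
    re (trace (diagonal (fun i ↦ (σ i : 𝕜)) * A * diagonal (fun i ↦ (δ i : 𝕜)) * Bᴴ))
      ≤ ∑ i, σ i * δ i := by
  have re_entry_le (i j : ι) : re (A i j * star (B i j)) ≤ ‖A i j‖ * ‖B i j‖ :=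
    (RCLike.re_le_norm _).trans_eq (by rw [norm_mul, norm_star])
  calc re (trace (diagonal (fun i ↦ (σ i : 𝕜)) * A * diagonal (fun i ↦ (δ i : 𝕜)) * Bᴴ))
      = ∑ i, ∑ j, σ i * (re (A i j * star (B i j)) * δ j) := by
        simp only [trace_diagonal_mul_mul_diagonal_mul_conjTranspose, map_sum,
          RCLike.re_ofReal_mul, RCLike.re_mul_ofReal]
    _ ≤ ∑ i, ∑ j, σ i * (‖A i j‖ * ‖B i j‖ * δ j) := by
        gcongr with i _ j _
        exacts [hσ i, hδ j, re_entry_le i j]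
    _ = σ ⬝ᵥ of (fun i j ↦ ‖A i j‖ * ‖B i j‖) *ᵥ δ := by
        simp only [dotProduct, mulVec, of_apply, Finset.mul_sum]
    _ ≤ ∑ i, σ i * δ i :=
        (isDoublySubstochastic_norm_mul_norm hA hB).dotProduct_mulVec_le hσ hδ hσδ

theorem von_neumann_trace_inequality_general {P U : Matrix m ι 𝕜} {Q V : Matrix n ι 𝕜}
    (hP : ‖P‖ ≤ 1) (hQ : ‖Q‖ ≤ 1) (hU : ‖U‖ ≤ 1) (hV : ‖V‖ ≤ 1)
    (hσ : ∀ i, 0 ≤ σ i) (hδ : ∀ i, 0 ≤ δ i) (hσδ : Monovary σ δ) :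
    re (trace (Q * diagonal (fun i ↦ (σ i : 𝕜)) * Pᴴ * U * diagonal (fun i ↦ (δ i : 𝕜)) * Vᴴ))
      ≤ ∑ i, σ i * δ i := by
  have cyclic : trace (Q * diagonal (fun i ↦ (σ i : 𝕜)) * Pᴴ * U *
        diagonal (fun i ↦ (δ i : 𝕜)) * Vᴴ)
      = trace (diagonal (fun i ↦ (σ i : 𝕜)) * (Pᴴ * U) * diagonal (fun i ↦ (δ i : 𝕜)) *
        (Qᴴ * V)ᴴ) := by
    simp only [conjTranspose_mul, conjTranspose_conjTranspose, Matrix.mul_assoc]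
    rw [trace_mul_comm]
    simp only [Matrix.mul_assoc]
  rw [cyclic]
  exact re_trace_diagonal_mul_mul_diagonal_mul_conjTranspose_le
    (l2_opNorm_conjTranspose_mul_le_one hP hU) (l2_opNorm_conjTranspose_mul_le_one hQ hV) hσ hδ hσδ

end Contraction

/-- von Neumann-type trace inequality: for semi-orthogonal `P, U ∈ ℝ^{m×L}`,
`Q, V ∈ ℝ^{n×L}` and diagonal matrices `Σ = diagonal σ`, `Δ = diagonal δ` with
nonnegative, nonincreasing diagonal entries,
`Tr(Q Σᵀ Pᵀ U Δ Vᵀ) ≤ Tr(Σᵀ Δ) = Σᵢ σᵢ δᵢ`. -/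
theorem von_neumann_trace_inequality (m n L : ℕ) (hLm : L ≤ m) (hLn : L ≤ n)
    (P U : Matrix (Fin m) (Fin L) ℝ) (Q V : Matrix (Fin n) (Fin L) ℝ)
    (hP : Pᵀ * P = 1) (hQ : Qᵀ * Q = 1) (hU : Uᵀ * U = 1) (hV : Vᵀ * V = 1)
    (σ δ : Fin L → ℝ)
    (hσ0 : ∀ i, 0 ≤ σ i) (hδ0 : ∀ i, 0 ≤ δ i)
    (hσmono : Antitone σ) (hδmono : Antitone δ) :
    Matrix.trace (Q * (Matrix.diagonal σ)ᵀ * Pᵀ * U * Matrix.diagonal δ * Vᵀ)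
      ≤ Matrix.trace ((Matrix.diagonal σ)ᵀ * Matrix.diagonal δ)
    ∧ Matrix.trace ((Matrix.diagonal σ)ᵀ * Matrix.diagonal δ)
      = ∑ i : Fin L, σ i * δ i := by
  have trace_eq : trace ((diagonal σ)ᵀ * diagonal δ) = ∑ i, σ i * δ i := by simp
  refine ⟨trace_eq ▸ ?_, trace_eq⟩
  simpa using von_neumann_trace_inequality_general
    (l2_opNorm_le_one_of_conjTranspose_mul_self_eq_one hP)
    (l2_opNorm_le_one_of_conjTranspose_mul_self_eq_one hQ)
    (l2_opNorm_le_one_of_conjTranspose_mul_self_eq_one hU)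
    (l2_opNorm_le_one_of_conjTranspose_mul_self_eq_one hV) hσ0 hδ0 (hσmono.monovary hδmono)
end
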